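/- Let K be a commutative ring and d ≥ 1. For j = 0,…,d−1, let n_j, p_j, r_j, k_j be natural numbers with k_j ≤ n_j, and let A_j ∈ K^{n_j × n_{j+1 mod d}}, B_j ∈ K^{p_j × n_j}, C_j ∈ K^{n_{j+1 mod d} × r_j}. For each j let X_j ⊆ {1,…,p_j} with |X_j| = k_j and Y_j ⊆ {1,…,r_j} with |Y_j| = k_j. Then ∑_{Q_0 ∈ 𝒬_{n_0}, …, Q_{d−1} ∈ 𝒬_{n_{d−1}}} ∑_{P_0 ∈ 𝒫_{n_0}, …, P_{d−1} ∈ 𝒫_{n_{d−1}}} ∏_{j=0}^{d−1} [B_j (Q_j P_j) A_j (Q_{j+1 mod d} P_{j+1 mod d})^{-1} C_j]_{X_j, Y_j} equals 0 unless k_0 = k_1 = ⋯ = k_{d−1}, in which case it equals (1+1)^{n_0+⋯+n_{d−1}} · (∏_{j=0}^{d−1} k_j!·(n_j−k_j)!·[B_j C_{j−1 mod d}]_{X_j, Y_{j−1 mod d}}) · [A_0 A_1 ⋯ A_{d−1}]^{(k_0)}, where the factorials are cast into K. -/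

import Mathlib

/-- `[A]_{S,T}`: the determinant of the submatrix of `A` with rows indexed by `S` and
columns indexed by `T`, both taken in increasing order. -/
def minorDet {K : Type} [CommRing K] {m p : ℕ} (A : Matrix (Fin m) (Fin p) K)
    (S : Finset (Fin m)) (T : Finset (Fin p)) : K :=
  if h : T.card = S.card then (A.submatrix (S.orderEmbOfFin rfl) (T.orderEmbOfFin h)).det else 0

/-- Reindex the rows of a matrix along an equality of dimensions. -/
def rowCast {K : Type} [CommRing K] {a b p : ℕ} (h : a = b) (M : Matrix (Fin a) (Fin p) K) :
    Matrix (Fin b) (Fin p) K :=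
  M.submatrix (Fin.cast h.symm) id

/-- Reindex the columns of a matrix along an equality of dimensions. -/
def colCast {K : Type} [CommRing K] {m a b : ℕ} (h : a = b) (M : Matrix (Fin m) (Fin a) K) :
    Matrix (Fin m) (Fin b) K :=
  M.submatrix id (Fin.cast h.symm)

open Fin.NatCast Fin.CommRing in
/-- Partial products `A_0 * A_1 * ⋯ * A_{m-1}` of a cyclic family of matrices
`A j : Matrix (Fin (n j)) (Fin (n (j+1))) K` for `j : Fin d`. -/
def cycProdAux {K : Type} [CommRing K] {d : ℕ} [NeZero d] {n : Fin d → ℕ}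
    (A : ∀ j : Fin d, Matrix (Fin (n j)) (Fin (n (j + 1))) K) :
    (m : ℕ) → Matrix (Fin (n 0)) (Fin (n (m : Fin d))) K
  | 0 => colCast (congrArg n (by simp)) (1 : Matrix (Fin (n 0)) (Fin (n 0)) K)
  | m + 1 => colCast (congrArg n (by push_cast; ring))
      (cycProdAux A m * A ((m : ℕ) : Fin d))

open Fin.NatCast Fin.CommRing in
/-- The cyclic product `A_0 * A_1 * ⋯ * A_{d-1}`, an `n 0 × n 0` matrix. -/
def cycProd {K : Type} [CommRing K] {d : ℕ} [NeZero d] {n : Fin d → ℕ}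
    (A : ∀ j : Fin d, Matrix (Fin (n j)) (Fin (n (j + 1))) K) :
    Matrix (Fin (n 0)) (Fin (n 0)) K :=
  colCast (congrArg n (by simp)) (cycProdAux A d)

/-- `[A]^{(k)}`: the sum of all principal `k × k` minors of `A`. -/
def minorSum {K : Type} [CommRing K] {m : ℕ} (A : Matrix (Fin m) (Fin m) K) (k : ℕ) : K :=
  ∑ S ∈ Finset.powersetCard k (Finset.univ : Finset (Fin m)), minorDet A S S

/-- The sign matrix (diagonal matrix with entries `±1`) determined by a choice of signs `ε`. -/
def signMatrix {m : ℕ} (K : Type) [CommRing K] (ε : Fin m → Bool) : Matrix (Fin m) (Fin m) K :=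
  Matrix.diagonal (fun i => if ε i then 1 else -1)

/-!
By the Cauchy–Binet formula, each factor of the product expands into a sum over index sets
`S_j ⊆ [n_j]` and `T_{j+1} ⊆ [n_{j+1}]` of minors of `B_j Q_j P_j`, `A_j` and
`(Q_{j+1} P_{j+1})⁻¹ C_j`. After regrouping, the signed permutation matrix `Q_j P_j` occurs only in
`[B_j Q_j P_j]_{X_j, S_j} [(Q_j P_j)⁻¹ C_{j-1}]_{T_j, Y_{j-1}}`, so that each pair `(Q_j, P_j)` can
be summed separately. Summing over the signs forces the two `n_j`-sided index sets produced by a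
further Cauchy–Binet expansion to agree; summing over the permutations then forces `S_j = T_j` and
`|S_j| = k_j`, with weight `k_j! (n_j - k_j)!`. What is left is the sum over closed walks
`S_0, …, S_{d-1}` of `∏ [A_j]_{S_j, S_{j+1}}`, which vanishes unless all `|S_j|` agree and otherwise
is the trace of the `k_0`-th compound matrix of `A_0 ⋯ A_{d-1}`.
-/

section FiniteSums

open Finset

variable {R : Type*} [CommSemiring R]

theorem sum_sum_comm_sum_sum {M α β γ δ : Type*} [AddCommMonoid M] [Fintype α] [Fintype β]
    [Fintype γ] [Fintype δ] (F : α → β → γ → δ → M) :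
    ∑ a, ∑ b, ∑ c, ∑ d, F a b c d = ∑ c, ∑ d, ∑ a, ∑ b, F a b c d := by
  simp only [← Fintype.sum_prod_type' (f := fun c d => F _ _ c d)]
  rw [← Fintype.sum_prod_type', sum_comm, Fintype.sum_prod_type]
  simp only [Fintype.sum_prod_type]

theorem sum_pi_comp_perm {J M : Type*} [Fintype J] [DecidableEq J] [AddCommMonoid M]
    (σ : Equiv.Perm J) {ι : J → Type*} [∀ j, Fintype (ι j)] (F : (∀ j, ι (σ j)) → M) :
    ∑ T : ∀ j, ι (σ j), F T = ∑ T : ∀ j, ι j, F fun j => T (σ j) :=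
  ((Equiv.piCongrLeft ι σ).symm.sum_comp F).symm

theorem sum_sum_prod_sum_sum_of_bijective {J : Type*} [Fintype J] [DecidableEq J] {τ : J → J}
    (hτ : Function.Bijective τ) {G H ι : J → Type*} [∀ j, Fintype (G j)] [∀ j, Fintype (H j)]
    [∀ j, Fintype (ι j)] (u v : ∀ j, G j → H j → ι j → R) (a : ∀ j, ι j → ι (τ j) → R) :
    ∑ g : ∀ j, G j, ∑ h : ∀ j, H j, ∏ j, ∑ s, ∑ t,
      u j (g j) (h j) s * a j s t * v (τ j) (g (τ j)) (h (τ j)) t =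
    ∑ S : ∀ j, ι j, ∑ T : ∀ j, ι j,
      (∏ j, a j (S j) (T (τ j))) * ∏ j, ∑ x, ∑ y, u j x y (S j) * v j x y (T j) := by
  -- Reindexing the `v`-factors along `τ` decouples the sums over `g j` and `h j` for distinct `j`.
  obtain ⟨σ, rfl⟩ : ∃ σ : Equiv.Perm J, ⇑σ = τ := ⟨Equiv.ofBijective τ hτ, rfl⟩
  have regroup (g : ∀ j, G j) (h : ∀ j, H j) (S T : ∀ j, ι j) :
      ∏ j, u j (g j) (h j) (S j) * a j (S j) (T (σ j)) * v (σ j) (g (σ j)) (h (σ j)) (T (σ j)) =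
      (∏ j, a j (S j) (T (σ j))) *
        ∏ j, u j (g j) (h j) (S j) * v j (g j) (h j) (T j) := by
    simp only [prod_mul_distrib]
    rw [Equiv.prod_comp σ fun j => v j (g j) (h j) (T j)]
    ring
  simp only [Fintype.prod_sum, sum_pi_comp_perm σ, regroup, mul_sum]
  exact sum_sum_comm_sum_sum _

theorem sum_sum_mul_prod_ite_eq_and {J : Type*} [Fintype J] [DecidableEq J] {ι : J → Type*}
    [∀ j, Fintype (ι j)] [∀ j, DecidableEq (ι j)] (F : (∀ j, ι j) → (∀ j, ι j) → R)
    (p : ∀ j, ι j → Prop) [∀ j s, Decidable (p j s)] [∀ S : ∀ j, ι j, Decidable (∀ j, p j (S j))]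
    (c : J → R) :
    ∑ S : ∀ j, ι j, ∑ T, F S T * ∏ j, (if S j = T j ∧ p j (S j) then c j else 0) =
      (∏ j, c j) * ∑ S : ∀ j, ι j, if ∀ j, p j (S j) then F S S else 0 := by
  rw [mul_sum]
  refine Fintype.sum_congr _ _ fun S => ?_
  rw [Fintype.sum_eq_single S]
  · by_cases h : ∀ j, p j (S j)
    · simp only [h, and_self, if_true, implies_true, mul_comm]
    · rw [Fintype.prod_ite_zero, if_neg fun hS => h fun j => (hS j).2, if_neg h, mul_zero, mul_zero]
  · intro T hT
    rw [Fintype.prod_ite_zero, if_neg fun hS => hT (funext fun j => (hS j).1.symm), mul_zero]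

theorem sum_mul_eq_sum_path_prod {m : ℕ} {κ : Fin (m + 1) → Type*} [∀ j, Fintype (κ j)]
    (W : ∀ i : Fin m, κ i.castSucc → κ i.succ → R) (P : ∀ j, κ j → R)
    (hP : ∀ i t, P i.succ t = ∑ s, P i.castSucc s * W i s t) (g : κ (Fin.last m) → R) :
    ∑ t, P (Fin.last m) t * g t =
      ∑ S : ∀ j, κ j, P 0 (S 0) * (∏ i, W i (S i.castSucc) (S i.succ)) * g (S (Fin.last m)) := by
  induction m with
  | zero =>
    rw [← (Fin.consEquiv κ).sum_comp, Fintype.sum_prod_type]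
    simp
  | succ m ih =>
    rw [← (Fin.consEquiv κ).sum_comp, Fintype.sum_prod_type_right]
    refine (ih (κ := fun j => κ j.succ) (fun i => W i.succ) (fun j => P j.succ)
      (fun i => hP i.succ) g).trans ?_
    refine sum_congr rfl fun S _ => ?_
    have step_zero : P (Fin.succ 0) (S 0) = ∑ s : κ 0, P 0 s * W 0 s (S 0) := hP 0 (S 0)
    rw [step_zero, sum_mul, sum_mul]
    refine sum_congr rfl fun s _ => ?_
    rw [Fin.prod_univ_succ, ← mul_assoc]
    rfl

end FiniteSums

section CauchyBinet

open Finset Matrix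

section Image

variable {ι κ : Type*} [Fintype ι] [DecidableEq κ]

theorem image_univ_eq_image_univ_iff_exists_perm {e : ι → κ}
    (he : Function.Injective e) (f : ι → κ) :
    univ.image f = univ.image e ↔ ∃ σ : Equiv.Perm ι, e ∘ σ = f := by
  constructor
  · intro h
    have hf : Function.Injective f := by
      rw [← Set.injOn_univ, ← coe_univ, ← card_image_iff, h, card_image_of_injective _ he]
    have hrange : Set.range f = Set.range e := by
      simpa using congrArg (fun s : Finset κ => (s : Set κ)) h
    refine ⟨(Equiv.ofInjective f hf).trans
      ((Equiv.setCongr hrange).trans (Equiv.ofInjective e he).symm), funext fun i => ?_⟩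
    simp [Equiv.apply_ofInjective_symm]
  · classical
    rintro ⟨σ, rfl⟩
    rw [← image_image, image_univ_equiv]

theorem sum_filter_image_eq_sum_perm [DecidableEq ι] {M : Type*} [AddCommMonoid M] [Fintype κ]
    {e : ι → κ} (he : Function.Injective e) (F : (ι → κ) → M) :
    ∑ f with univ.image f = univ.image e, F f = ∑ σ : Equiv.Perm ι, F (e ∘ σ) := by
  have comp_injective : Function.Injective fun σ : Equiv.Perm ι => e ∘ σ := fun _ _ h =>
    Equiv.ext fun i => he (congrFun h i)
  rw [← sum_image (f := F) comp_injective.injOn]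
  congr 1
  ext f
  simp [image_univ_eq_image_univ_iff_exists_perm he]

end Image

variable {R : Type*} [CommRing R] {ι κ : Type*} [Fintype ι] [DecidableEq ι]

theorem det_mul_eq_sum_prod_mul_det_submatrix [Fintype κ] (A : Matrix ι κ R) (B : Matrix κ ι R) :
    (A * B).det = ∑ f : ι → κ, (∏ i, A i (f i)) * (B.submatrix f id).det := by
  have rows_mul : A * B = fun i => ∑ j, A i j • B j := by
    ext i l
    simp [mul_apply]
  rw [rows_mul]
  change detRowAlternating.toMultilinearMap (fun i => ∑ j, A i j • B j) = _
  simp only [MultilinearMap.map_sum, MultilinearMap.map_smul_univ]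
  rfl

theorem sum_prod_mul_det_submatrix_comp_perm (A : Matrix ι κ R) (B : Matrix κ ι R) (e : ι → κ) :
    ∑ σ : Equiv.Perm ι, (∏ i, A i (e (σ i))) * (B.submatrix (e ∘ σ) id).det =
      (A.submatrix id e).det * (B.submatrix e id).det := by
  rw [← det_transpose (A.submatrix id e), det_apply', sum_mul]
  refine sum_congr rfl fun σ _ => ?_
  have det_rows_comp : (B.submatrix (e ∘ σ) id).det =
      (Equiv.Perm.sign σ : R) * (B.submatrix e id).det := det_permute σ (B.submatrix e id)
  simp only [det_rows_comp, transpose_apply, submatrix_apply, id]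
  ring

end CauchyBinet

section MinorDet

open Finset Matrix

variable {K : Type} [CommRing K] {m n p : ℕ}

theorem minorDet_eq_det_submatrix {k : ℕ} (A : Matrix (Fin m) (Fin p) K) {S : Finset (Fin m)}
    {T : Finset (Fin p)} (hS : #S = k) (hT : #T = k) :
    minorDet A S T = (A.submatrix (S.orderEmbOfFin hS) (T.orderEmbOfFin hT)).det := by
  subst hS
  simp [minorDet, hT]

theorem minorDet_of_card_ne (A : Matrix (Fin m) (Fin p) K) {S : Finset (Fin m)}
    {T : Finset (Fin p)} (h : #S ≠ #T) : minorDet A S T = 0 := by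
  simp [minorDet, h.symm]

theorem minorDet_mul (A : Matrix (Fin m) (Fin n) K) (B : Matrix (Fin n) (Fin p) K)
    (S : Finset (Fin m)) (T : Finset (Fin p)) :
    minorDet (A * B) S T = ∑ U, minorDet A S U * minorDet B U T := by
  by_cases hST : #T = #S
  swap
  · rw [minorDet_of_card_ne _ (Ne.symm hST)]
    refine (sum_eq_zero fun U _ => ?_).symm
    by_cases hSU : #S = #U
    · rw [minorDet_of_card_ne B (hSU ▸ Ne.symm hST), mul_zero]
    · rw [minorDet_of_card_ne A hSU, zero_mul]
  rw [minorDet_eq_det_submatrix _ rfl hST, submatrix_mul _ _ _ id _ Function.bijective_id,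
    det_mul_eq_sum_prod_mul_det_submatrix, ← sum_fiberwise univ fun f => univ.image f]
  refine sum_congr rfl fun U _ => ?_
  by_cases hU : #U = #S
  · rw [minorDet_eq_det_submatrix A rfl hU, minorDet_eq_det_submatrix B hU hST]
    conv_lhs => enter [1, 1, f]; rw [← image_orderEmbOfFin_univ U hU]
    rw [sum_filter_image_eq_sum_perm (U.orderEmbOfFin hU).injective]
    exact sum_prod_mul_det_submatrix_comp_perm _ _ _
  · rw [minorDet_of_card_ne A (Ne.symm hU), zero_mul]
    refine sum_eq_zero fun f hf => ?_
    have not_injective : ¬ Function.Injective f := fun hf_inj => hU <| by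
      rw [← (mem_filter.1 hf).2, card_image_of_injective _ hf_inj, card_univ, Fintype.card_fin]
    obtain ⟨a, b, hab, hne⟩ := Function.not_injective_iff.1 not_injective
    rw [det_zero_of_row_eq hne (by ext j; simp [hab]), mul_zero]

theorem minorDet_mul_mul {q : ℕ} (B : Matrix (Fin m) (Fin n) K) (A : Matrix (Fin n) (Fin p) K)
    (C : Matrix (Fin p) (Fin q) K) (X : Finset (Fin m)) (Y : Finset (Fin q)) :
    minorDet (B * A * C) X Y =
      ∑ S, ∑ T, minorDet B X S * minorDet A S T * minorDet C T Y := by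
  rw [sum_comm]
  simp only [minorDet_mul, sum_mul]

theorem minorDet_transpose (A : Matrix (Fin m) (Fin p) K) (S : Finset (Fin p))
    (T : Finset (Fin m)) : minorDet Aᵀ S T = minorDet A T S := by
  by_cases h : #T = #S
  · rw [minorDet_eq_det_submatrix _ rfl h, minorDet_eq_det_submatrix A h rfl, ← det_transpose]
    rfl
  · rw [minorDet_of_card_ne _ (Ne.symm h), minorDet_of_card_ne _ h]

theorem minorDet_of_row_eq_zero (A : Matrix (Fin m) (Fin p) K) {S : Finset (Fin m)}
    {T : Finset (Fin p)} {i : Fin m} (hi : i ∈ S) (h : ∀ j ∈ T, A i j = 0) :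
    minorDet A S T = 0 := by
  by_cases hc : #T = #S
  · rw [minorDet_eq_det_submatrix A rfl hc]
    obtain ⟨a, rfl⟩ : i ∈ Set.range (S.orderEmbOfFin rfl) := by
      rwa [range_orderEmbOfFin]
    exact det_eq_zero_of_row_eq_zero a fun j => h _ (T.orderEmbOfFin_mem hc j)
  · exact minorDet_of_card_ne A (Ne.symm hc)

theorem minorDet_diagonal_mul (v : Fin m → K) (A : Matrix (Fin m) (Fin p) K)
    (S : Finset (Fin m)) (T : Finset (Fin p)) :
    minorDet (diagonal v * A) S T = (∏ i ∈ S, v i) * minorDet A S T := by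
  by_cases h : #T = #S
  · have rows_scaled : (diagonal v * A).submatrix (S.orderEmbOfFin rfl) (T.orderEmbOfFin h) =
        of fun i j => v (S.orderEmbOfFin rfl i) *
          A.submatrix (S.orderEmbOfFin rfl) (T.orderEmbOfFin h) i j := by
      ext i j
      simp
    have prod_rows : ∏ i, v (S.orderEmbOfFin rfl i) = ∏ i ∈ S, v i := by
      conv_rhs => rw [← map_orderEmbOfFin_univ S rfl, prod_map]
      rfl
    rw [minorDet_eq_det_submatrix _ rfl h, minorDet_eq_det_submatrix A rfl h, rows_scaled,
      det_mul_column, prod_rows]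
  · rw [minorDet_of_card_ne _ (Ne.symm h), minorDet_of_card_ne _ (Ne.symm h), mul_zero]

theorem minorDet_permMatrix_of_map_ne (π : Equiv.Perm (Fin m)) {U S : Finset (Fin m)}
    (h : U.map π.toEmbedding ≠ S) : minorDet (π.permMatrix K) U S = 0 := by
  by_cases hc : #U = #S
  · have not_subset : ¬ U.map π.toEmbedding ⊆ S := fun hs =>
      h (eq_of_subset_of_card_le hs (by rw [card_map, hc]))
    obtain ⟨_, hi, hiS⟩ := Finset.not_subset.1 not_subset
    obtain ⟨a, ha, rfl⟩ := mem_map.1 hi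
    refine minorDet_of_row_eq_zero _ ha fun j hj => ?_
    have image_ne : π a ≠ j := fun haj => hiS (haj ▸ hj)
    simp [PEquiv.toMatrix_apply, image_ne]
  · exact minorDet_of_card_ne _ hc

theorem minorDet_one (S T : Finset (Fin m)) :
    minorDet (1 : Matrix (Fin m) (Fin m) K) S T = if S = T then 1 else 0 := by
  split_ifs with h
  · subst h
    rw [minorDet_eq_det_submatrix _ rfl rfl, submatrix_one _ (S.orderEmbOfFin rfl).injective,
      det_one]
  · rw [← permMatrix_one]
    exact minorDet_permMatrix_of_map_ne 1 fun hST => h (by rw [← hST]; exact map_refl.symm)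

end MinorDet

section SignedPerm

open Finset Matrix
open scoped Nat

variable {K : Type} [CommRing K] {m : ℕ}

theorem permMatrix_mul_transpose {R ι : Type*} [Ring R] [Fintype ι] [DecidableEq ι]
    (π : Equiv.Perm ι) : π.permMatrix R * (π.permMatrix R)ᵀ = 1 := by
  rw [transpose_permMatrix, ← permMatrix_mul, inv_mul_cancel, permMatrix_one]

theorem minorDet_permMatrix_mul_minorDet_permMatrix (π : Equiv.Perm (Fin m))
    (U S T : Finset (Fin m)) :
    minorDet (π.permMatrix K) U S * minorDet (π.permMatrix K) U T =
      if S = T ∧ U.map π.toEmbedding = S then 1 else 0 := by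
  by_cases hS : U.map π.toEmbedding = S
  swap
  · simp [hS, minorDet_permMatrix_of_map_ne π hS]
  by_cases hST : S = T
  swap
  · simp [hST, minorDet_permMatrix_of_map_ne π (hS ▸ hST)]
  subst hST
  have cauchyBinet := minorDet_mul (π.permMatrix K) (π.permMatrix K)ᵀ U U
  rw [permMatrix_mul_transpose, minorDet_one, if_pos rfl, sum_eq_single S, minorDet_transpose]
    at cauchyBinet
  · simp [hS, ← cauchyBinet]
  · intro T _ hT
    rw [minorDet_permMatrix_of_map_ne π (hS ▸ hT.symm), zero_mul]
  · simp

theorem inv_signMatrix_mul_permMatrix (ε : Fin m → Bool) (π : Equiv.Perm (Fin m)) :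
    (signMatrix K ε * π.permMatrix K)⁻¹ = (signMatrix K ε * π.permMatrix K)ᵀ := by
  have signMatrix_mul_self : signMatrix K ε * signMatrix K ε = 1 := by
    rw [signMatrix, diagonal_mul_diagonal, ← diagonal_one]
    congr 1
    ext i
    split_ifs <;> simp
  refine inv_eq_right_inv ?_
  rw [transpose_mul, Matrix.mul_assoc, ← Matrix.mul_assoc (π.permMatrix K),
    permMatrix_mul_transpose, Matrix.one_mul, signMatrix, diagonal_transpose]
  exact signMatrix_mul_self

theorem sum_prod_sign_mul_prod_sign {R ι : Type*} [CommRing R] [Fintype ι] [DecidableEq ι]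
    (U V : Finset ι) :
    ∑ ε : ι → Bool, (∏ i ∈ U, if ε i then (1 : R) else -1) * ∏ i ∈ V, (if ε i then 1 else -1) =
      if U = V then (1 + 1) ^ Fintype.card ι else 0 := by
  let χ (W : Finset ι) (i : ι) (b : Bool) : R := if i ∈ W then (if b then 1 else -1) else 1
  have prod_sign (W : Finset ι) (ε : ι → Bool) :
      ∏ i ∈ W, (if ε i then (1 : R) else -1) = ∏ i, χ W i (ε i) := by
    simp [χ, prod_ite_mem]
  have sum_sign (i : ι) : ∑ b, χ U i b * χ V i b = if i ∈ U ↔ i ∈ V then 1 + 1 else 0 := by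
    by_cases hU : i ∈ U <;> by_cases hV : i ∈ V <;> simp [χ, hU, hV, one_add_one_eq_two]
  simp only [prod_sign, ← prod_mul_distrib]
  rw [← Fintype.prod_sum fun i b => χ U i b * χ V i b]
  simp only [sum_sign, Fintype.prod_ite_zero, prod_const, card_univ, Finset.ext_iff]

theorem exists_perm_map_eq {ι : Type*} [Finite ι] {U S : Finset ι} (h : #U = #S) :
    ∃ ρ : Equiv.Perm ι, U.map ρ.toEmbedding = S := by
  classical
  refine ⟨(equivOfCardEq h).extendSubtype, eq_of_subset_of_card_le ?_ (by rw [card_map, h])⟩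
  intro x hx
  obtain ⟨a, ha, rfl⟩ := mem_map.1 hx
  exact (equivOfCardEq h).extendSubtype_mem a ha

theorem map_perm_eq_iff {ι : Type*} {π : Equiv.Perm ι} {U S : Finset ι} :
    U.map π.toEmbedding = S ↔ ∀ a, π a ∈ S ↔ a ∈ U := by
  rw [Finset.ext_iff, ← π.forall_congr_right]
  refine forall_congr' fun a => ?_
  rw [mem_map_equiv, Equiv.symm_apply_apply]
  exact iff_comm

theorem card_filter_perm_map_eq {ι : Type*} [Fintype ι] [DecidableEq ι] {U S : Finset ι}
    (h : #U = #S) :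
    #{π : Equiv.Perm ι | U.map π.toEmbedding = S} = (#U)! * (Fintype.card ι - #U)! := by
  obtain ⟨ρ, hρ⟩ := exists_perm_map_eq h
  let inU (a : ι) : Bool := decide (a ∈ U)
  have stabilizes_iff (π : Equiv.Perm ι) :
      U.map π.toEmbedding = S ↔ inU ∘ (ρ⁻¹ * π : Equiv.Perm ι) = inU := by
    simp only [map_perm_eq_iff, ← hρ, mem_map_equiv, funext_iff, inU, Function.comp_apply,
      decide_eq_decide]
    rfl
  calc #{π : Equiv.Perm ι | U.map π.toEmbedding = S}
      = Fintype.card {π : Equiv.Perm ι // U.map π.toEmbedding = S} :=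
        (Fintype.card_subtype _).symm
    _ = Fintype.card {π : Equiv.Perm ι // inU ∘ π = inU} :=
        Fintype.card_congr ((Equiv.mulLeft ρ⁻¹).subtypeEquiv stabilizes_iff)
    _ = (#U)! * (Fintype.card ι - #U)! := by
        rw [DomMulAct.stabilizer_card, Fintype.prod_bool]
        simp [inU, Fintype.card_subtype_compl]

theorem sum_minorDet_permMatrix_mul_minorDet_permMatrix (U S T : Finset (Fin m)) :
    ∑ π : Equiv.Perm (Fin m), minorDet (π.permMatrix K) U S * minorDet (π.permMatrix K) U T =
      if S = T ∧ #U = #S then (((#U)! * (m - #U)! : ℕ) : K) else 0 := by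
  simp only [minorDet_permMatrix_mul_minorDet_permMatrix]
  split_ifs with h
  · simp only [h.1, true_and, sum_boole]
    rw [card_filter_perm_map_eq (h.1 ▸ h.2), Fintype.card_fin]
  · refine sum_eq_zero fun π _ => if_neg fun hπ => h ⟨hπ.1, ?_⟩
    rw [← hπ.2, card_map]

theorem sum_minorDet_signedPerm_mul_minorDet_inv (U S T V : Finset (Fin m)) :
    ∑ ε : Fin m → Bool, ∑ π : Equiv.Perm (Fin m),
      minorDet (signMatrix K ε * π.permMatrix K) U S *
        minorDet (signMatrix K ε * π.permMatrix K)⁻¹ T V =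
    if U = V ∧ S = T ∧ #U = #S then (1 + 1) ^ m * (((#U)! * (m - #U)! : ℕ) : K) else 0 := by
  have split_sign_perm (ε : Fin m → Bool) (π : Equiv.Perm (Fin m)) :
      minorDet (signMatrix K ε * π.permMatrix K) U S *
        minorDet (signMatrix K ε * π.permMatrix K)⁻¹ T V =
      ((∏ i ∈ U, if ε i then (1 : K) else -1) * ∏ i ∈ V, (if ε i then 1 else -1)) *
        (minorDet (π.permMatrix K) U S * minorDet (π.permMatrix K) V T) := by
    rw [inv_signMatrix_mul_permMatrix, minorDet_transpose, signMatrix, minorDet_diagonal_mul,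
      minorDet_diagonal_mul, mul_mul_mul_comm]
  simp only [split_sign_perm]
  rw [← sum_mul_sum, sum_prod_sign_mul_prod_sign, Fintype.card_fin]
  by_cases hUV : U = V
  · subst hUV
    simp [sum_minorDet_permMatrix_mul_minorDet_permMatrix]
  · simp [hUV]

theorem sum_minorDet_mul_signedPerm_mul_minorDet_inv_mul {p r : ℕ}
    (B : Matrix (Fin p) (Fin m) K) (C : Matrix (Fin m) (Fin r) K) (X : Finset (Fin p))
    (Y : Finset (Fin r)) (S T : Finset (Fin m)) :
    ∑ ε : Fin m → Bool, ∑ π : Equiv.Perm (Fin m),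
      minorDet (B * (signMatrix K ε * π.permMatrix K)) X S *
        minorDet ((signMatrix K ε * π.permMatrix K)⁻¹ * C) T Y =
    if S = T ∧ #S = #X then
      (1 + 1) ^ m * (((#X)! * (m - #X)! : ℕ) : K) * minorDet (B * C) X Y else 0 := by
  calc _ = ∑ U, ∑ V, minorDet B X U * minorDet C V Y *
        ∑ ε : Fin m → Bool, ∑ π : Equiv.Perm (Fin m),
          minorDet (signMatrix K ε * π.permMatrix K) U S *
            minorDet (signMatrix K ε * π.permMatrix K)⁻¹ T V := by
        simp only [minorDet_mul B, minorDet_mul _ C, sum_mul_sum]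
        rw [sum_sum_comm_sum_sum]
        simp only [mul_sum]
        refine sum_congr rfl fun U _ => sum_congr rfl fun V _ =>
          sum_congr rfl fun ε _ => sum_congr rfl fun π _ => ?_
        ring
    _ = ∑ U, if S = T ∧ #S = #X then
          (1 + 1) ^ m * (((#X)! * (m - #X)! : ℕ) : K) * (minorDet B X U * minorDet C U Y)
        else 0 := by
        refine sum_congr rfl fun U _ => ?_
        simp only [sum_minorDet_signedPerm_mul_minorDet_inv, ite_and, mul_ite, mul_zero,
          sum_ite_eq, mem_univ, if_true]
        by_cases hU : #X = #U
        · rw [hU]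
          simp only [eq_comm (a := #U), mul_comm]
        · simp [minorDet_of_card_ne B hU]
    _ = _ := by
        split_ifs
        · rw [minorDet_mul, mul_sum]
        · exact sum_const_zero

end SignedPerm

section CycProd

open Finset Matrix

variable {K : Type} [CommRing K]

section Cast

variable {J : Type*} {n : J → ℕ} {q : ℕ} {i j : J}

theorem colCast_mul_eq_mul {r : J → ℕ} (hij : i = j) (M : Matrix (Fin q) (Fin (n i)) K)
    (A : ∀ j, Matrix (Fin (n j)) (Fin (r j)) K) {b : ℕ} (hb : r i = b) :
    colCast hb (M * A i) =
      colCast (congrArg n hij) M * colCast ((congrArg r hij).symm.trans hb) (A j) := by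
  subst hij hb
  rfl

theorem minorDet_colCast (hij : i = j) (M : Matrix (Fin q) (Fin (n i)) K) (s : Finset (Fin q))
    (S : ∀ j, Finset (Fin (n j))) :
    minorDet (colCast (congrArg n hij) M) s (S j) = minorDet M s (S i) := by
  subst hij
  rfl

theorem minorDet_mul_rowCast {r : J → ℕ} (C : ∀ j, Matrix (Fin (n j)) (Fin (r j)) K)
    (Y : ∀ j, Finset (Fin (r j))) (hij : i = j) (N : Matrix (Fin q) (Fin (n j)) K)
    (T : Finset (Fin q)) :
    minorDet (N * rowCast (congrArg n hij) (C i)) T (Y i) = minorDet (N * C j) T (Y j) := by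
  subst hij
  rfl

end Cast

section PartialProducts

variable {m : ℕ} {n : Fin (m + 1) → ℕ}

/-- The product `A_0 ⋯ A_{j-1}`: `cycProdAux` with its number of columns `n (j : ℕ)`
rewritten as `n j`. -/
def cycPartialProd (A : ∀ j : Fin (m + 1), Matrix (Fin (n j)) (Fin (n (j + 1))) K)
    (j : Fin (m + 1)) : Matrix (Fin (n 0)) (Fin (n j)) K :=
  colCast (congrArg n (Fin.cast_val_eq_self j)) (cycProdAux A j)

variable (A : ∀ j : Fin (m + 1), Matrix (Fin (n j)) (Fin (n (j + 1))) K)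

theorem cycPartialProd_zero : cycPartialProd A 0 = 1 := rfl

theorem cycPartialProd_succ (i : Fin m) :
    cycPartialProd A i.succ =
      cycPartialProd A i.castSucc * colCast (congrArg n Fin.coeSucc_eq_succ) (A i.castSucc) :=
  colCast_mul_eq_mul (Fin.cast_val_eq_self i.castSucc) (cycProdAux A i) A
    (congrArg n (by rw [Fin.cast_val_eq_self, Fin.coeSucc_eq_succ]))

theorem cycProd_eq_cycPartialProd_last_mul :
    cycProd A =
      cycPartialProd A (Fin.last m) * colCast (congrArg n (Fin.last_add_one m)) (A (Fin.last m)) :=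
  colCast_mul_eq_mul (Fin.cast_val_eq_self (Fin.last m)) (cycProdAux A m) A (congrArg n (by simp))

theorem minorDet_cycProd_self_eq_sum_succ (s : Finset (Fin (n 0))) :
    minorDet (cycProd A) s s =
      ∑ S : ∀ j, Finset (Fin (n j)),
        if s = S 0 then ∏ j, minorDet (A j) (S j) (S (j + 1)) else 0 := by
  rw [cycProd_eq_cycPartialProd_last_mul, minorDet_mul,
    sum_mul_eq_sum_path_prod
      (fun i u t =>
        minorDet (colCast (congrArg n Fin.coeSucc_eq_succ) (A i.castSucc)) u t)
      (fun j => minorDet (cycPartialProd A j) s)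
      (fun i t => by rw [cycPartialProd_succ, minorDet_mul])]
  refine sum_congr rfl fun S _ => ?_
  rw [cycPartialProd_zero, minorDet_one, ite_mul, ite_mul, zero_mul, zero_mul, one_mul]
  refine if_ctx_congr Iff.rfl (fun hs => ?_) fun _ => rfl
  rw [Fin.prod_univ_castSucc, hs]
  exact congrArg₂ (· * ·)
    (prod_congr rfl fun i _ => minorDet_colCast Fin.coeSucc_eq_succ (A i.castSucc) _ S)
    (minorDet_colCast (Fin.last_add_one m) (A (Fin.last m)) _ S)

end PartialProducts

theorem eq_apply_zero_of_apply_add_one_eq {d : ℕ} [NeZero d] {α : Type*} {f : Fin d → α}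
    (h : ∀ j, f (j + 1) = f j) (j : Fin d) : f j = f 0 := by
  obtain ⟨m, rfl⟩ := Nat.exists_eq_succ_of_ne_zero (NeZero.ne d)
  induction j using Fin.induction with
  | zero => rfl
  | succ i ih => rw [← Fin.coeSucc_eq_succ, h, ih]

variable {d : ℕ} [NeZero d] {n : Fin d → ℕ}
    (A : ∀ j : Fin d, Matrix (Fin (n j)) (Fin (n (j + 1))) K)

theorem minorDet_cycProd_self_eq_sum (s : Finset (Fin (n 0))) :
    minorDet (cycProd A) s s =
      ∑ S : ∀ j, Finset (Fin (n j)),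
        if s = S 0 then ∏ j, minorDet (A j) (S j) (S (j + 1)) else 0 := by
  obtain ⟨m, rfl⟩ := Nat.exists_eq_succ_of_ne_zero (NeZero.ne d)
  exact minorDet_cycProd_self_eq_sum_succ A s

theorem minorSum_cycProd_eq_sum (k : ℕ) :
    minorSum (cycProd A) k =
      ∑ S : ∀ j, Finset (Fin (n j)),
        if #(S 0) = k then ∏ j, minorDet (A j) (S j) (S (j + 1)) else 0 := by
  simp only [minorSum, minorDet_cycProd_self_eq_sum]
  rw [sum_comm]
  simp

theorem sum_prod_minorDet_cyclic (k : Fin d → ℕ) :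
    (∑ S : ∀ j, Finset (Fin (n j)),
      if ∀ j, #(S j) = k j then ∏ j, minorDet (A j) (S j) (S (j + 1)) else 0) =
    if ∀ j, k j = k 0 then minorSum (cycProd A) (k 0) else 0 := by
  have card_const (S : ∀ j, Finset (Fin (n j)))
      (hS : ∏ j, minorDet (A j) (S j) (S (j + 1)) ≠ 0) (j : Fin d) : #(S j) = #(S 0) := by
    refine eq_apply_zero_of_apply_add_one_eq (f := fun j => #(S j)) (fun j => ?_) j
    by_contra hj
    exact hS (prod_eq_zero (mem_univ j) (minorDet_of_card_ne _ (Ne.symm hj)))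
  split_ifs with hk
  · rw [minorSum_cycProd_eq_sum]
    refine sum_congr rfl fun S _ => ?_
    by_cases hS : ∏ j, minorDet (A j) (S j) (S (j + 1)) = 0
    · simp only [hS, ite_self]
    · refine if_congr ⟨fun h => h 0, fun h j => ?_⟩ rfl rfl
      rw [card_const S hS, h, hk j]
  · refine sum_eq_zero fun S _ => ite_eq_right_iff.2 fun hS => by_contra fun hprod => hk fun j => ?_
    rw [← hS, card_const S hprod, hS]

end CycProd

section CyclicAverage

open Finset Matrix
open scoped Nat

variable {K : Type} [CommRing K] {d : ℕ} [NeZero d]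

theorem sum_signedPerm_prod_minorDet {n p r k : Fin d → ℕ}
    (A : ∀ j : Fin d, Matrix (Fin (n j)) (Fin (n (j + 1))) K)
    (B : ∀ j : Fin d, Matrix (Fin (p j)) (Fin (n j)) K)
    (C : ∀ j : Fin d, Matrix (Fin (n j)) (Fin (r j)) K)
    (X : ∀ j : Fin d, Finset (Fin (p j))) (hX : ∀ j, #(X j) = k j)
    (Y : ∀ j : Fin d, Finset (Fin (r j))) :
    ∑ ε : (∀ j : Fin d, Fin (n j) → Bool), ∑ π : (∀ j : Fin d, Equiv.Perm (Fin (n j))),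
      ∏ j, minorDet
        (B j * (signMatrix K (ε j) * (π j).permMatrix K) * A j *
          ((signMatrix K (ε (j + 1)) * (π (j + 1)).permMatrix K)⁻¹ * C (j + 1)))
        (X j) (Y (j + 1)) =
    if ∀ j, k j = k 0 then
      (1 + 1 : K) ^ (∑ j, n j) *
        (∏ j, (((k j)! * (n j - k j)! : ℕ) : K) * minorDet (B j * C j) (X j) (Y j)) *
        minorSum (cycProd A) (k 0)
    else 0 := by
  simp only [minorDet_mul_mul]
  calc _ = ∑ S : ∀ j, Finset (Fin (n j)), ∑ T : ∀ j, Finset (Fin (n j)),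
        (∏ j, minorDet (A j) (S j) (T (j + 1))) *
          ∏ j, ∑ ε : Fin (n j) → Bool, ∑ π : Equiv.Perm (Fin (n j)),
            minorDet (B j * (signMatrix K ε * π.permMatrix K)) (X j) (S j) *
              minorDet ((signMatrix K ε * π.permMatrix K)⁻¹ * C j) (T j) (Y j) :=
        sum_sum_prod_sum_sum_of_bijective (G := fun j => Fin (n j) → Bool)
          (H := fun j => Equiv.Perm (Fin (n j))) (ι := fun j => Finset (Fin (n j)))
          (τ := fun j => j + 1) (Equiv.addRight (1 : Fin d)).bijective
          (fun j ε π => minorDet (B j * (signMatrix K ε * π.permMatrix K)) (X j))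
          (fun j ε π T => minorDet ((signMatrix K ε * π.permMatrix K)⁻¹ * C j) T (Y j))
          (fun j => minorDet (A j))
    _ = _ := by
        simp only [sum_minorDet_mul_signedPerm_mul_minorDet_inv_mul, hX]
        rw [sum_sum_mul_prod_ite_eq_and _ (fun j s => #s = k j), sum_prod_minorDet_cyclic,
          mul_ite, mul_zero]
        simp only [mul_assoc, prod_mul_distrib, prod_pow_eq_pow_sum]

end CyclicAverage

theorem stmt_7 {K : Type} [CommRing K] (d : ℕ) [NeZero d]
    (n p r k : Fin d → ℕ) (hk : ∀ j, k j ≤ n j)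
    (A : ∀ j : Fin d, Matrix (Fin (n j)) (Fin (n (j + 1))) K)
    (B : ∀ j : Fin d, Matrix (Fin (p j)) (Fin (n j)) K)
    (C : ∀ j : Fin d, Matrix (Fin (n (j + 1))) (Fin (r j)) K)
    (X : ∀ j : Fin d, Finset (Fin (p j))) (hX : ∀ j, (X j).card = k j)
    (Y : ∀ j : Fin d, Finset (Fin (r j))) (hY : ∀ j, (Y j).card = k j) :
    ∑ ε : (∀ j : Fin d, Fin (n j) → Bool),
      ∑ π : (∀ j : Fin d, Equiv.Perm (Fin (n j))),
        ∏ j : Fin d,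
          minorDet
            (B j * (signMatrix K (ε j) * (π j).permMatrix K) * A j *
                (signMatrix K (ε (j + 1)) * (π (j + 1)).permMatrix K)⁻¹ * C j)
            (X j) (Y j) =
      if ∀ j : Fin d, k j = k 0 then
        (1 + 1 : K) ^ (∑ j : Fin d, n j) *
          (∏ j : Fin d,
            (((k j).factorial * (n j - k j).factorial : ℕ) : K) *
              minorDet (B j * rowCast (congrArg n (by simp)) (C (j - 1))) (X j) (Y (j - 1))) *
          minorSum (cycProd A) (k 0)
      else 0 := by
  have shift_C (ε : ∀ j, Fin (n j) → Bool) (π : ∀ j, Equiv.Perm (Fin (n j))) (j : Fin d) :=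
    minorDet_mul_rowCast (n := fun j => n (j + 1)) C Y (add_sub_cancel_right j 1)
      (B j * (signMatrix K (ε j) * (π j).permMatrix K) * A j *
        (signMatrix K (ε (j + 1)) * (π (j + 1)).permMatrix K)⁻¹) (X j)
  simp only [← shift_C, Matrix.mul_assoc _ _ (rowCast _ _)]
  exact sum_signedPerm_prod_minorDet A B (fun j => rowCast (congrArg n (by simp)) (C (j - 1))) X hX
    fun j => Y (j - 1)
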